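/- arXiv:1802.07236 — 4 statements merged into one kernel-verified Lean document; each statement's English description precedes it below -/
import Mathlib

section
/- Let a > 0 and B ∈ ℝ. Let (b_n), (c_n) be sequences of real numbers with b_n → +∞, c_n → +∞ and c_n − b_n → B, and let θ_n ∈ [0, π] be angles satisfying the hyperbolic law of cosines cosh(c_n) = cosh(a)·cosh(b_n) − sinh(a)·sinh(b_n)·cos(θ_n) for every n. Then cos(θ_n) converges to (cosh(a) − e^B)/sinh(a); consequently the sequence (θ_n) converges to a limit θ ∈ [0, π] satisfying e^B = cosh(a) − sinh(a)·cos(θ). -/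
open Filter Topology Real

/-! Put `δ = c - b`. The addition formula gives `cosh c / cosh b = cosh δ + sinh δ * tanh b`, which
tends to `cosh B + sinh B = exp B`, because `tanh b → 1`. Divided by `cosh b`, the law of cosines
expresses the same ratio as `cosh a - sinh a * (tanh b * cos θ)`, so it determines the limit of
`cos θ`, and `arccos`, being continuous, turns that into the limit of `θ`. -/

theorem tendsto_tanh_atTop_nhds_one : Tendsto tanh atTop (𝓝 1) := by
  have hexp : Tendsto (fun x : ℝ => exp (-x) ^ 2) atTop (𝓝 0) := by
    simpa using tendsto_exp_neg_atTop_nhds_zero.pow 2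
  have hquot : Tendsto (fun x : ℝ => (1 - exp (-x) ^ 2) / (1 + exp (-x) ^ 2)) atTop (𝓝 1) := by
    simpa [Pi.div_def] using (hexp.const_sub 1).div (hexp.const_add 1) (by norm_num)
  refine hquot.congr fun x => ?_
  rw [tanh_eq, exp_neg]
  field_simp

theorem cosh_div_cosh (x y : ℝ) :
    cosh x / cosh y = cosh (x - y) + sinh (x - y) * tanh y := by
  have hadd : cosh x = cosh (x - y) * cosh y + sinh (x - y) * sinh y := by
    rw [← cosh_add, sub_add_cancel]
  have hy : cosh y ≠ 0 := (cosh_pos y).ne'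
  rw [hadd, tanh_eq_sinh_div_cosh]
  field_simp

section

variable {ι : Type*} {l : Filter ι} {b c θ x : ι → ℝ} {a B p q y : ℝ}

theorem tendsto_cosh_div_cosh (hb : Tendsto b l atTop)
    (hcb : Tendsto (fun i => c i - b i) l (𝓝 B)) :
    Tendsto (fun i => cosh (c i) / cosh (b i)) l (𝓝 (exp B)) := by
  have hcosh : Tendsto (fun i => cosh (c i - b i)) l (𝓝 (cosh B)) :=
    (continuous_cosh.tendsto B).comp hcb
  have hsinh : Tendsto (fun i => sinh (c i - b i)) l (𝓝 (sinh B)) :=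
    (continuous_sinh.tendsto B).comp hcb
  have htanh : Tendsto (fun i => tanh (b i)) l (𝓝 1) := tendsto_tanh_atTop_nhds_one.comp hb
  simpa only [cosh_div_cosh, mul_one, cosh_add_sinh] using hcosh.add (hsinh.mul htanh)

theorem tendsto_of_cosh_eq_sub (hq : q ≠ 0) (hb : Tendsto b l atTop)
    (hcb : Tendsto (fun i => c i - b i) l (𝓝 B))
    (hlaw : ∀ᶠ i in l, cosh (c i) = p * cosh (b i) - q * sinh (b i) * x i) :
    Tendsto x l (𝓝 ((p - exp B) / q)) := by
  have htanh : Tendsto (fun i => tanh (b i)) l (𝓝 1) := tendsto_tanh_atTop_nhds_one.comp hb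
  have hquot : Tendsto (fun i => (p - cosh (c i) / cosh (b i)) / (q * tanh (b i))) l
      (𝓝 ((p - exp B) / (q * 1))) :=
    ((tendsto_cosh_div_cosh hb hcb).const_sub p).div (htanh.const_mul q) (by simpa using hq)
  rw [mul_one] at hquot
  refine hquot.congr' ?_
  filter_upwards [hlaw, htanh.eventually_ne one_ne_zero] with i hi htanh_ne
  have hcosh_ne : cosh (b i) ≠ 0 := (cosh_pos (b i)).ne'
  have hratio : cosh (c i) / cosh (b i) = p - q * tanh (b i) * x i := by
    rw [hi, tanh_eq_sinh_div_cosh]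
    field_simp
  rw [hratio, sub_sub_cancel, mul_div_cancel_left₀ _ (mul_ne_zero hq htanh_ne)]

theorem exists_tendsto_of_tendsto_cos [l.NeBot] (hθ : ∀ᶠ i in l, θ i ∈ Set.Icc 0 π)
    (hcos : Tendsto (fun i => cos (θ i)) l (𝓝 y)) :
    ∃ φ ∈ Set.Icc 0 π, Tendsto θ l (𝓝 φ) ∧ cos φ = y := by
  have hlim : Tendsto θ l (𝓝 (arccos y)) :=
    ((continuous_arccos.tendsto y).comp hcos).congr' <|
      hθ.mono fun _ hi => arccos_cos hi.1 hi.2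
  exact ⟨arccos y, ⟨arccos_nonneg y, arccos_le_pi y⟩, hlim,
    tendsto_nhds_unique ((continuous_cos.tendsto _).comp hlim) hcos⟩

theorem busemann_comparison_angle_limit_general [l.NeBot] (ha : a ≠ 0) (hb : Tendsto b l atTop)
    (hcb : Tendsto (fun i => c i - b i) l (𝓝 B)) (hθ : ∀ᶠ i in l, θ i ∈ Set.Icc 0 π)
    (hlaw : ∀ᶠ i in l,
      cosh (c i) = cosh a * cosh (b i) - sinh a * sinh (b i) * cos (θ i)) :
    Tendsto (fun i => cos (θ i)) l (𝓝 ((cosh a - exp B) / sinh a)) ∧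
      ∃ θ' ∈ Set.Icc 0 π, Tendsto θ l (𝓝 θ') ∧ exp B = cosh a - sinh a * cos θ' := by
  have hsinh : sinh a ≠ 0 := sinh_ne_zero.mpr ha
  have hcos := tendsto_of_cosh_eq_sub hsinh hb hcb hlaw
  obtain ⟨θ', hθ', hlim, hcosθ'⟩ := exists_tendsto_of_tendsto_cos hθ hcos
  refine ⟨hcos, θ', hθ', hlim, ?_⟩
  rw [hcosθ', mul_div_cancel₀ _ hsinh, sub_sub_cancel]

end

/-- Let `a > 0` and `B ∈ ℝ`. Let `b n`, `c n` be sequences of reals tending to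
`+∞` with `c n - b n → B`, and let `θ n ∈ [0, π]` satisfy the hyperbolic law of cosines
`cosh (c n) = cosh a * cosh (b n) - sinh a * sinh (b n) * cos (θ n)` for every `n`. Then
`cos (θ n)` converges to `(cosh a - exp B) / sinh a`; consequently `θ n` converges to a limit
`θ' ∈ [0, π]` satisfying `exp B = cosh a - sinh a * cos θ'`. -/
theorem busemann_comparison_angle_limit
    (a B : ℝ) (ha : 0 < a) (b c θ : ℕ → ℝ)
    (hb : Tendsto b atTop atTop) (hc : Tendsto c atTop atTop)
    (hcb : Tendsto (fun n => c n - b n) atTop (𝓝 B))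
    (hθ : ∀ n, θ n ∈ Set.Icc 0 Real.pi)
    (hlaw : ∀ n, Real.cosh (c n) =
      Real.cosh a * Real.cosh (b n) - Real.sinh a * Real.sinh (b n) * Real.cos (θ n)) :
    Tendsto (fun n => Real.cos (θ n)) atTop
        (𝓝 ((Real.cosh a - Real.exp B) / Real.sinh a)) ∧
    ∃ θ' ∈ Set.Icc 0 Real.pi,
      Tendsto θ atTop (𝓝 θ') ∧ Real.exp B = Real.cosh a - Real.sinh a * Real.cos θ' :=
  busemann_comparison_angle_limit_general ha.ne' hb hcb (.of_forall hθ) (.of_forall hlaw)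
end

section
/- Let f : ℝ → ℝ be a trigonometric polynomial, i.e. f(r) = ∑_{j=1}^k (a_j cos(β_j r) + b_j sin(β_j r)) for some real numbers a_j, b_j, β_j. If f(r) → 0 as r → +∞, then f is identically zero. -/
/-!
A trigonometric polynomial is a continuous function on the torus `(ℝ/2πℤ)^k` evaluated along the
one-parameter subgroup `r ↦ (β₁ r, …, β_k r)`. The torus is compact, so the multiples of the point
at time `1` accumulate at the identity; hence the subgroup returns arbitrarily close to each of its
points at arbitrarily late times, and every value of the polynomial is one of its cluster values at
`+∞`. If the polynomial has a limit there, that limit is its only value.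
-/

open Filter Topology

section Recurrence

variable {R G : Type*} [PartialOrder R]
  [AddGroup G] [TopologicalSpace G] [CompactSpace G] [IsTopologicalAddGroup G]

theorem mapClusterPt_zero_atTop_addMonoidHom [Semiring R] [IsOrderedRing R] [Archimedean R]
    (φ : R →+ G) : MapClusterPt 0 atTop φ := by
  have hnat : MapClusterPt 0 atTop (φ ∘ ((↑) : ℕ → R)) := by
    simpa only [Function.comp_def, ← map_nsmul, nsmul_one] using
      mapClusterPt_zero_atTop_nsmul (φ 1)
  exact hnat.of_comp tendsto_natCast_atTop_atTop

variable [Ring R] [IsOrderedRing R] [Archimedean R]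

theorem mapClusterPt_atTop_addMonoidHom (φ : R →+ G) (r : R) : MapClusterPt (φ r) atTop φ := by
  have htranslate : MapClusterPt (φ r) atTop (φ ∘ (r + ·)) := by
    simpa only [Function.comp_def, map_add, add_zero] using
      (mapClusterPt_zero_atTop_addMonoidHom φ).continuousAt_comp
        (continuous_const_add (φ r)).continuousAt
  exact htranslate.of_comp (tendsto_atTop_add_const_left _ r tendsto_id)

theorem eq_of_tendsto_comp_addMonoidHom {X : Type*} [TopologicalSpace X] [T2Space X]
    {F : G → X} (hF : Continuous F) (φ : R →+ G) {l : X}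
    (hlim : Tendsto (F ∘ φ) atTop (𝓝 l)) (r : R) : F (φ r) = l := by
  have hcluster : MapClusterPt (F (φ r)) atTop (F ∘ φ) :=
    (mapClusterPt_atTop_addMonoidHom φ r).continuousAt_comp hF.continuousAt
  have : (𝓝 (F (φ r)) ⊓ 𝓝 l).NeBot := hcluster.clusterPt.mono hlim
  exact eq_of_nhds_neBot this

end Recurrence

instance compactSpace_realAngle : CompactSpace Real.Angle :=
  haveI : Fact (0 < 2 * Real.pi) := ⟨Real.two_pi_pos⟩
  inferInstanceAs (CompactSpace (AddCircle (2 * Real.pi)))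

/-- The linear (Kronecker) flow `r ↦ (β j * r mod 2π)_j` on the torus with frequency vector `β`,
as a one-parameter subgroup. -/
noncomputable def torusLinearFlow {ι : Type*} (β : ι → ℝ) : ℝ →+ (ι → Real.Angle) :=
  AddMonoidHom.pi fun j => Real.Angle.coeHom.comp (AddMonoidHom.mulLeft (β j))

section TrigPoly

variable {ι E : Type*} [Fintype ι] [AddCommMonoid E] [Module ℝ E]

/-- The function on the torus that restricts, along `torusLinearFlow β`, to the trigonometric
polynomial with coefficients `a`, `b` and frequencies `β`. -/
noncomputable def torusTrigPoly (a b : ι → E) (θ : ι → Real.Angle) : E :=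
  ∑ j, ((θ j).cos • a j + (θ j).sin • b j)

theorem torusTrigPoly_torusLinearFlow (a b : ι → E) (β : ι → ℝ) (r : ℝ) :
    torusTrigPoly a b (torusLinearFlow β r) =
      ∑ j, (Real.cos (β j * r) • a j + Real.sin (β j * r) • b j) :=
  rfl

variable [TopologicalSpace E] [ContinuousAdd E] [ContinuousSMul ℝ E]

theorem continuous_torusTrigPoly (a b : ι → E) : Continuous (torusTrigPoly a b) :=
  continuous_finsetSum _ fun j _ =>
    ((Real.Angle.continuous_cos.comp (continuous_apply j)).smul continuous_const).add
      ((Real.Angle.continuous_sin.comp (continuous_apply j)).smul continuous_const)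

theorem trigPoly_tendsto_zero_eq_zero_general [T2Space E]
    (f : ℝ → E) (a b : ι → E) (β : ι → ℝ) (l : E)
    (hf : ∀ r, f r = ∑ j, (Real.cos (β j * r) • a j + Real.sin (β j * r) • b j))
    (hlim : Tendsto f atTop (𝓝 l)) (r : ℝ) : f r = l := by
  have hflow : f = torusTrigPoly a b ∘ torusLinearFlow β :=
    funext fun t => (hf t).trans (torusTrigPoly_torusLinearFlow a b β t).symm
  subst hflow
  exact eq_of_tendsto_comp_addMonoidHom (continuous_torusTrigPoly a b) (torusLinearFlow β) hlim r

end TrigPoly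

/-- Let `f : ℝ → ℝ` be a trigonometric polynomial, i.e.
`f r = ∑ j, (a j * cos (β j * r) + b j * sin (β j * r))` for some reals `a j`, `b j`, `β j`.
If `f r → 0` as `r → +∞`, then `f` is identically zero. -/
theorem trigPoly_tendsto_zero_eq_zero
    (f : ℝ → ℝ) (k : ℕ) (a b β : Fin k → ℝ)
    (hf : ∀ r, f r = ∑ j, (a j * Real.cos (β j * r) + b j * Real.sin (β j * r)))
    (hlim : Tendsto f atTop (𝓝 0)) :
    ∀ r, f r = 0 :=
  trigPoly_tendsto_zero_eq_zero_general f a b β 0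
    (fun r => by simp only [hf, smul_eq_mul, mul_comm]) hlim
end

section
/- Let ρ > 0, C₀ > 0, and let P : ℝ → ℝ be an exponential polynomial of exponential degree δ < 2ρ. Set A(r) = C₀·e^{2ρr} + P(r), and suppose A is positive on [r₀, ∞) for some r₀ > 0. Then there exist constants α > 0, M > 0 and R ≥ r₀ such that for all r ≥ R, |A'(r)/A(r) − 2ρ| ≤ M·e^{−αr} and |(A'/A)'(r)| ≤ M·e^{−αr}. -/
open Filter Topology

/-- An *exponential polynomial* is a function of the form
`A r = ∑ i, (pᵢ(r) cos (βᵢ r) + qᵢ(r) sin (βᵢ r)) * exp (αᵢ r)`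
where `pᵢ, qᵢ` are real polynomials and `αᵢ, βᵢ ∈ ℝ`. -/
def IsExpPoly (A : ℝ → ℝ) : Prop :=
  ∃ (k : ℕ) (p q : Fin k → Polynomial ℝ) (α β : Fin k → ℝ),
    ∀ r, A r = ∑ i,
      ((p i).eval r * Real.cos (β i * r) + (q i).eval r * Real.sin (β i * r)) * Real.exp (α i * r)

/-- A function `P` has *exponential degree* `δ` if `P r * exp (-s*r) → 0` as `r → +∞` for every
`s > δ`, and this fails for every `s < δ`. -/
def HasExpDegree (P : ℝ → ℝ) (δ : ℝ) : Prop :=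
  (∀ s, δ < s → Tendsto (fun r => P r * Real.exp (-s * r)) atTop (𝓝 0)) ∧
  (∀ s, s < δ → ¬ Tendsto (fun r => P r * Real.exp (-s * r)) atTop (𝓝 0))

/-!
Write `A r = exp (2 * ρ * r) * g r` with `g r = C₀ + P r * exp (-2 * ρ * r)`. Then
`A'/A = 2ρ + g'/g` and `(A'/A)' = g''/g - (g'/g)²`, and `g` tends to `C₀ ≠ 0`, so it suffices that
`g'` and `g''` decay exponentially. Differentiating `P` term by term does not show this, since the
exponents written in `P` may exceed its degree when terms cancel. Instead, the translates of an
exponential polynomial `f` span a finite-dimensional space, on which `h ↦ h' 0` is a linear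
combination of evaluations. Hence `f'` is a linear combination of translates of `f`, and inherits
every bound on `f` that is stable under translation.
-/

open Asymptotics

/-- The functions whose translates all lie in one finitely generated module, i.e. the
representative functions of the additive structure `G`, as a subalgebra of `G → R`. They stand in
for exponential polynomials. Asking for some finitely generated `V` rather than for the span of the
translates itself makes closure under sums and products immediate. -/
def translationFinite (R G : Type*) [CommSemiring R] [Add G] : Subalgebra R (G → R) where
  carrier := {f | ∃ V : Submodule R (G → R), V.FG ∧ ∀ t, (fun x => f (x + t)) ∈ V}
  add_mem' := by
    rintro f g ⟨V, hV, hf⟩ ⟨W, hW, hg⟩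
    exact ⟨V ⊔ W, hV.sup hW, fun t => Submodule.add_mem_sup (hf t) (hg t)⟩
  mul_mem' := by
    rintro f g ⟨V, hV, hf⟩ ⟨W, hW, hg⟩
    exact ⟨V * W, hV.mul hW, fun t => Submodule.mul_mem_mul (hf t) (hg t)⟩
  algebraMap_mem' a :=
    ⟨_, Submodule.fg_span_singleton (algebraMap R (G → R) a),
      fun _ => Submodule.mem_span_singleton_self _⟩

namespace translationFinite

lemma comp_add_right_mem {R G : Type*} [CommSemiring R] [AddSemigroup G] {f : G → R}
    (hf : f ∈ translationFinite R G) (t : G) : (fun x => f (x + t)) ∈ translationFinite R G := by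
  obtain ⟨V, hV, hfV⟩ := hf
  exact ⟨V, hV, fun s => by simpa only [add_assoc] using hfV (s + t)⟩

lemma fg_span_translates {R G : Type*} [CommRing R] [IsNoetherianRing R] [Add G]
    {f : G → R} (hf : f ∈ translationFinite R G) :
    (Submodule.span R (Set.range fun t x => f (x + t))).FG := by
  obtain ⟨V, hV, hfV⟩ := hf
  exact hV.of_le (Submodule.span_le.2 (Set.range_subset_iff.2 hfV))

lemma id_mem (R : Type*) [CommSemiring R] : (id : R → R) ∈ translationFinite R R :=
  ⟨Submodule.span R {id, 1}, Submodule.fg_span (Set.toFinite _), fun t =>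
    Submodule.mem_span_pair.2 ⟨1, t, by ext x; simp⟩⟩

lemma polynomial_eval_mem {R : Type*} [CommSemiring R] (p : Polynomial R) :
    (fun x => p.eval x) ∈ translationFinite R R := by
  have haeval : (fun x => p.eval x) = Polynomial.aeval (id : R → R) p := by
    ext x
    simp [Polynomial.aeval_fn_apply]
  rw [haeval]
  exact Subalgebra.aeval_coe _ (⟨id, id_mem R⟩ : translationFinite R R) p ▸ SetLike.coe_mem _

lemma exp_mul_mem (a : ℝ) : (fun x => Real.exp (a * x)) ∈ translationFinite ℝ ℝ :=
  ⟨_, Submodule.fg_span_singleton fun x => Real.exp (a * x), fun t =>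
    Submodule.mem_span_singleton.2
      ⟨Real.exp (a * t), by ext x; simp [mul_add, Real.exp_add, mul_comm]⟩⟩

lemma cos_mul_mem (b : ℝ) : (fun x => Real.cos (b * x)) ∈ translationFinite ℝ ℝ :=
  ⟨Submodule.span ℝ {fun x => Real.cos (b * x), fun x => Real.sin (b * x)},
    Submodule.fg_span (Set.toFinite _), fun t => Submodule.mem_span_pair.2
      ⟨Real.cos (b * t), -Real.sin (b * t), by
        ext x
        simp only [Pi.add_apply, Pi.smul_apply, smul_eq_mul, mul_add, Real.cos_add]
        ring⟩⟩

lemma sin_mul_mem (b : ℝ) : (fun x => Real.sin (b * x)) ∈ translationFinite ℝ ℝ :=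
  ⟨Submodule.span ℝ {fun x => Real.cos (b * x), fun x => Real.sin (b * x)},
    Submodule.fg_span (Set.toFinite _), fun t => Submodule.mem_span_pair.2
      ⟨Real.sin (b * t), Real.cos (b * t), by
        ext x
        simp only [Pi.add_apply, Pi.smul_apply, smul_eq_mul, mul_add, Real.sin_add]
        ring⟩⟩

end translationFinite

open translationFinite in
lemma IsExpPoly.mem_translationFinite {P : ℝ → ℝ} (hP : IsExpPoly P) :
    P ∈ translationFinite ℝ ℝ := by
  obtain ⟨k, p, q, α, β, hP⟩ := hP
  have hsum : P = ∑ i, ((fun r => (p i).eval r) * (fun r => Real.cos (β i * r))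
      + (fun r => (q i).eval r) * (fun r => Real.sin (β i * r)))
      * fun r => Real.exp (α i * r) := by
    ext r
    simp [hP r]
  rw [hsum]
  exact sum_mem fun i _ => mul_mem
    (add_mem (mul_mem (polynomial_eval_mem (p i)) (cos_mul_mem (β i)))
      (mul_mem (polynomial_eval_mem (q i)) (sin_mul_mem (β i)))) (exp_mul_mem (α i))

lemma IsExpPoly.differentiable {P : ℝ → ℝ} (hP : IsExpPoly P) : Differentiable ℝ P := by
  obtain ⟨k, p, q, α, β, hP⟩ := hP
  rw [funext hP]
  fun_prop

section DerivativeByTranslates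

lemma exists_eq_sum_eval {K X : Type*} [Field K] (V : Submodule K (X → K))
    [FiniteDimensional K V] (φ : V →ₗ[K] K) :
    ∃ c : X →₀ K, ∀ f : V, φ f = c.sum fun x a => a * (f : X → K) x := by
  let eval (x : X) : V →ₗ[K] K := LinearMap.proj x ∘ₗ V.subtype
  have hφ : φ ∈ Submodule.span K (Set.range eval) := by
    refine FiniteDimensional.mem_span_of_iInf_ker_le_ker fun f hf => ?_
    have hf0 : f = 0 := Subtype.ext (funext fun x => (Submodule.mem_iInf _).1 hf x)
    simp [hf0]
  obtain ⟨c, rfl⟩ := Finsupp.mem_span_range_iff_exists_finsupp.1 hφ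
  exact ⟨c, fun f => by simp [Finsupp.sum, eval]⟩

variable {𝕜 : Type*} [NontriviallyNormedField 𝕜] {f : 𝕜 → 𝕜}

lemma exists_deriv_eq_sum_translates (hf : f ∈ translationFinite 𝕜 𝕜) (hd : Differentiable 𝕜 f) :
    ∃ c : 𝕜 →₀ 𝕜, deriv f = ∑ t ∈ c.support, c t • fun r => f (r + t) := by
  let V := Submodule.span 𝕜 (Set.range fun t x => f (x + t))
  have : FiniteDimensional 𝕜 V := .of_fg (translationFinite.fg_span_translates hf)
  have hV (h : V) : Differentiable 𝕜 (h : 𝕜 → 𝕜) := by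
    refine Submodule.span_induction ?_ (differentiable_const 0) (fun _ _ _ _ => .add)
      (fun a _ _ h => h.const_smul a) h.2
    rintro _ ⟨t, rfl⟩
    fun_prop
  let derivZero : V →ₗ[𝕜] 𝕜 :=
    { toFun h := deriv (h : 𝕜 → 𝕜) 0
      map_add' g h := deriv_add (hV g 0) (hV h 0)
      map_smul' a h := deriv_const_smul a (hV h 0) }
  obtain ⟨c, hc⟩ := exists_eq_sum_eval V derivZero
  refine ⟨c, funext fun r => ?_⟩
  calc deriv f r = deriv (fun x => f (x + r)) 0 := by rw [deriv_comp_add_const, zero_add]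
    _ = c.sum fun t a => a * f (t + r) := hc ⟨_, Submodule.subset_span ⟨r, rfl⟩⟩
    _ = _ := by simp [Finsupp.sum, add_comm]

lemma deriv_mem_translationFinite (hf : f ∈ translationFinite 𝕜 𝕜) (hd : Differentiable 𝕜 f) :
    deriv f ∈ translationFinite 𝕜 𝕜 := by
  obtain ⟨c, hc⟩ := exists_deriv_eq_sum_translates hf hd
  rw [hc]
  exact sum_mem fun t _ => Subalgebra.smul_mem _ (translationFinite.comp_add_right_mem hf t) _

lemma differentiable_deriv_of_mem_translationFinite (hf : f ∈ translationFinite 𝕜 𝕜)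
    (hd : Differentiable 𝕜 f) : Differentiable 𝕜 (deriv f) := by
  obtain ⟨c, hc⟩ := exists_deriv_eq_sum_translates hf hd
  rw [hc]
  fun_prop

lemma isBigO_deriv_of_mem_translationFinite {l : Filter 𝕜} {u : 𝕜 → ℝ}
    (hl : ∀ t, Tendsto (fun r => r + t) l l) (hu : ∀ t, (fun r => u (r + t)) =O[l] u)
    (hf : f ∈ translationFinite 𝕜 𝕜) (hd : Differentiable 𝕜 f) (hfu : f =O[l] u) :
    deriv f =O[l] u := by
  obtain ⟨c, hc⟩ := exists_deriv_eq_sum_translates hf hd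
  rw [hc]
  exact IsBigO.sum fun t _ => ((hfu.comp_tendsto (hl t)).trans (hu t)).const_smul_left (c t)

end DerivativeByTranslates

lemma isBigO_exp_mul_add (l : Filter ℝ) (s t : ℝ) :
    (fun r => Real.exp (s * (r + t))) =O[l] fun r => Real.exp (s * r) := by
  simp only [mul_add, Real.exp_add, mul_comm _ (Real.exp (s * t))]
  exact (isBigO_refl _ l).const_mul_left _

lemma isBigO_deriv_of_isBigO_exp {f : ℝ → ℝ} {s : ℝ} (hf : f ∈ translationFinite ℝ ℝ)
    (hd : Differentiable ℝ f) (hs : f =O[atTop] fun r => Real.exp (s * r)) :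
    deriv f =O[atTop] fun r => Real.exp (s * r) :=
  isBigO_deriv_of_mem_translationFinite (fun t => tendsto_atTop_add_const_right _ t tendsto_id)
    (isBigO_exp_mul_add atTop s) hf hd hs

lemma HasExpDegree.isBigO_exp {P : ℝ → ℝ} {δ s : ℝ} (hP : HasExpDegree P δ) (hs : δ < s) :
    P =O[atTop] fun r => Real.exp (s * r) := by
  refine isBigO_of_div_tendsto_nhds (.of_forall fun r h => (Real.exp_ne_zero _ h).elim) 0
    ((hP.1 s hs).congr fun r => ?_)
  rw [Pi.div_apply, neg_mul, Real.exp_neg, div_eq_mul_inv]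

lemma tendsto_exp_mul_atTop_nhds_zero {s : ℝ} (hs : s < 0) :
    Tendsto (fun r => Real.exp (s * r)) atTop (𝓝 0) :=
  Real.tendsto_exp_atBot.comp (tendsto_id.const_mul_atTop_of_neg hs)

section LogDeriv

variable {𝕜 𝕜' : Type*} [NontriviallyNormedField 𝕜] [NontriviallyNormedField 𝕜']
  [NormedAlgebra 𝕜 𝕜'] {g : 𝕜 → 𝕜'}

lemma deriv_logDeriv {r : 𝕜} (hd : DifferentiableAt 𝕜 g r)
    (hd' : DifferentiableAt 𝕜 (deriv g) r) (hr : g r ≠ 0) :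
    deriv (logDeriv g) r = deriv (deriv g) r / g r - logDeriv g r ^ 2 := by
  rw [logDeriv, deriv_div hd' hd hr, Pi.div_apply]
  field_simp

variable {l : Filter 𝕜} {u : 𝕜 → ℝ} {C : 𝕜'}

lemma isBigO_logDeriv_of_tendsto (hC : C ≠ 0) (hg : Tendsto g l (𝓝 C))
    (hg' : deriv g =O[l] u) : logDeriv g =O[l] u :=
  (hg'.mul ((hg.inv₀ hC).isBigO_one ℝ)).congr (fun _ => (div_eq_mul_inv _ _).symm)
    fun _ => mul_one _

lemma isBigO_deriv_logDeriv_of_tendsto (hC : C ≠ 0) (hg : Tendsto g l (𝓝 C))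
    (hd : Differentiable 𝕜 g) (hd' : Differentiable 𝕜 (deriv g)) (hg' : deriv g =O[l] u)
    (hg'' : deriv (deriv g) =O[l] u) (hu : u =O[l] (1 : 𝕜 → ℝ)) :
    deriv (logDeriv g) =O[l] u := by
  have hquot : (fun r => deriv (deriv g) r / g r) =O[l] u := by
    simpa [div_eq_mul_inv] using hg''.mul ((hg.inv₀ hC).isBigO_one ℝ)
  have hlog := isBigO_logDeriv_of_tendsto hC hg hg'
  have hsq : (fun r => logDeriv g r ^ 2) =O[l] u := by
    simpa [sq] using hlog.mul (hlog.trans hu)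
  refine (hquot.sub hsq).congr' ?_ .rfl
  filter_upwards [hg.eventually_ne hC] with r hr
  exact (deriv_logDeriv (hd r) (hd' r) hr).symm

lemma logDeriv_exp_mul {g : ℝ → ℝ} {r : ℝ} (lam : ℝ) (hd : DifferentiableAt ℝ g r)
    (hr : g r ≠ 0) : logDeriv (fun x => Real.exp (lam * x) * g x) r = lam + logDeriv g r := by
  have hexp : logDeriv (fun x => Real.exp (lam * x)) r = lam := by
    rw [logDeriv_apply, ((hasDerivAt_id' r).const_mul lam).exp.deriv, mul_one,
      mul_div_cancel_left₀ _ (Real.exp_ne_zero _)]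
  rw [logDeriv_mul (f := fun x => Real.exp (lam * x)) r (Real.exp_ne_zero _) hr (by fun_prop) hd,
    hexp]

lemma deriv_logDeriv_exp_mul {g : ℝ → ℝ} {r : ℝ} (lam : ℝ) (hd : Differentiable ℝ g)
    (hr : g r ≠ 0) :
    deriv (logDeriv fun x => Real.exp (lam * x) * g x) r = deriv (logDeriv g) r := by
  have hlog : (logDeriv fun x => Real.exp (lam * x) * g x) =ᶠ[𝓝 r] fun x => lam + logDeriv g x :=
    (hd.continuous.continuousAt.eventually_ne hr).mono fun x hx => logDeriv_exp_mul lam (hd x) hx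
  rw [hlog.deriv_eq, deriv_const_add]

end LogDeriv

section ExponentialPerturbation

variable {Q : ℝ → ℝ} {s : ℝ}

lemma tendsto_const_add_of_isBigO_exp (C : ℝ) (hs : s < 0)
    (hQs : Q =O[atTop] fun r => Real.exp (s * r)) : Tendsto (fun r => C + Q r) atTop (𝓝 C) := by
  simpa using (hQs.trans_tendsto (tendsto_exp_mul_atTop_nhds_zero hs)).const_add C

lemma isBigO_logDeriv_const_add {C : ℝ} (hC : C ≠ 0) (hQ : Q ∈ translationFinite ℝ ℝ)
    (hd : Differentiable ℝ Q) (hs : s < 0) (hQs : Q =O[atTop] fun r => Real.exp (s * r)) :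
    (logDeriv fun r => C + Q r) =O[atTop] (fun r => Real.exp (s * r)) ∧
      deriv (logDeriv fun r => C + Q r) =O[atTop] fun r => Real.exp (s * r) := by
  have hderiv : (deriv fun r => C + Q r) = deriv Q := funext fun r => deriv_const_add C
  have hd' := differentiable_deriv_of_mem_translationFinite hQ hd
  have hQ' := isBigO_deriv_of_isBigO_exp hQ hd hQs
  have hQ'' := isBigO_deriv_of_isBigO_exp (deriv_mem_translationFinite hQ hd) hd' hQ'
  rw [← hderiv] at hd' hQ' hQ''
  have htendsto := tendsto_const_add_of_isBigO_exp C hs hQs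
  exact ⟨isBigO_logDeriv_of_tendsto hC htendsto hQ',
    isBigO_deriv_logDeriv_of_tendsto hC htendsto (hd.const_add C) hd' hQ' hQ''
      ((tendsto_exp_mul_atTop_nhds_zero hs).isBigO_one ℝ)⟩

theorem isBigO_logDeriv_const_mul_exp_add {P : ℝ → ℝ} {C lam : ℝ} (hC : C ≠ 0)
    (hP : P ∈ translationFinite ℝ ℝ) (hd : Differentiable ℝ P) (hs : s < lam)
    (hPs : P =O[atTop] fun r => Real.exp (s * r)) :
    (fun r => logDeriv (fun x => C * Real.exp (lam * x) + P x) r - lam)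
        =O[atTop] (fun r => Real.exp (-(lam - s) * r)) ∧
      deriv (logDeriv fun x => C * Real.exp (lam * x) + P x)
        =O[atTop] fun r => Real.exp (-(lam - s) * r) := by
  let Q (r : ℝ) : ℝ := P r * Real.exp (-lam * r)
  have hfactor : (fun x => C * Real.exp (lam * x) + P x)
      = fun x => Real.exp (lam * x) * (C + Q x) := by
    ext x
    simp only [Q, neg_mul, Real.exp_neg]
    field_simp
  have hQd : Differentiable ℝ Q := by fun_prop
  have hQs : Q =O[atTop] fun r => Real.exp (-(lam - s) * r) := by
    refine (hPs.mul (isBigO_refl (fun r => Real.exp (-lam * r)) atTop)).congr_right fun r => ?_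
    rw [← Real.exp_add]
    ring_nf
  have hQ : Q ∈ translationFinite ℝ ℝ := mul_mem hP (translationFinite.exp_mul_mem (-lam))
  have hneg : -(lam - s) < 0 := neg_lt_zero.2 (sub_pos.2 hs)
  obtain ⟨hlog, hlog'⟩ := isBigO_logDeriv_const_add hC hQ hQd hneg hQs
  have hne := (tendsto_const_add_of_isBigO_exp C hneg hQs).eventually_ne hC
  rw [hfactor]
  refine ⟨hlog.congr' (hne.mono fun r hr => ?_) .rfl, hlog'.congr' (hne.mono fun r hr => ?_) .rfl⟩
  · exact eq_sub_of_add_eq' (logDeriv_exp_mul lam (hQd.const_add C r) hr).symm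
  · exact (deriv_logDeriv_exp_mul lam (hQd.const_add C) hr).symm

end ExponentialPerturbation

theorem meanCurvature_exponential_decay_general {lam s C : ℝ} {P A : ℝ → ℝ} (hC : C ≠ 0)
    (hP : IsExpPoly P) (hPs : P =O[atTop] fun r => Real.exp (s * r)) (hs : s < lam)
    (hA : ∀ r, A r = C * Real.exp (lam * r) + P r) (r₀ : ℝ) :
    ∃ M > (0 : ℝ), ∃ R ≥ r₀, ∀ r ≥ R,
      |deriv A r / A r - lam| ≤ M * Real.exp (-(lam - s) * r) ∧
      |deriv (fun x => deriv A x / A x) r| ≤ M * Real.exp (-(lam - s) * r) := by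
  obtain ⟨hlog, hlog'⟩ :=
    isBigO_logDeriv_const_mul_exp_add hC hP.mem_translationFinite hP.differentiable hs hPs
  rw [← funext hA] at hlog hlog'
  obtain ⟨M, hM, hbound⟩ := (hlog.prod_left hlog').exists_pos
  obtain ⟨R, hR⟩ := eventually_atTop.1 (hbound.bound.and (eventually_ge_atTop r₀))
  refine ⟨M, hM, R, (hR R le_rfl).2, fun r hr => ?_⟩
  have hmax := (hR r hr).1
  rw [Real.norm_of_nonneg (Real.exp_nonneg _)] at hmax
  exact max_le_iff.1 hmax

/-- Let `ρ > 0`, `C₀ > 0`, and let `P` be an exponential polynomial of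
exponential degree `δ < 2ρ`. Set `A r = C₀ * exp (2ρr) + P r` and suppose `A` is positive on
`[r₀, ∞)` for some `r₀ > 0`. Then there are constants `α > 0`, `M > 0` and `R ≥ r₀` such that
for all `r ≥ R`, `|A' r / A r - 2ρ| ≤ M * exp (-αr)` and `|(A'/A)' r| ≤ M * exp (-αr)`. -/
theorem meanCurvature_exponential_decay
    (ρ C₀ : ℝ) (hρ : 0 < ρ) (hC₀ : 0 < C₀)
    (P : ℝ → ℝ) (δ : ℝ) (hP : IsExpPoly P) (hdeg : HasExpDegree P δ) (hδ : δ < 2 * ρ)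
    (A : ℝ → ℝ) (hA : ∀ r, A r = C₀ * Real.exp (2 * ρ * r) + P r)
    (r₀ : ℝ) (hr₀ : 0 < r₀) (hpos : ∀ r ≥ r₀, 0 < A r) :
    ∃ α > (0 : ℝ), ∃ M > (0 : ℝ), ∃ R ≥ r₀, ∀ r ≥ R,
      |deriv A r / A r - 2 * ρ| ≤ M * Real.exp (-α * r) ∧
      |deriv (fun s => deriv A s / A s) r| ≤ M * Real.exp (-α * r) := by
  obtain ⟨s, hδs, hs⟩ := exists_between hδ
  exact ⟨2 * ρ - s, sub_pos.2 hs,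
    meanCurvature_exponential_decay_general hC₀.ne' hP (hdeg.isBigO_exp hδs) hs hA r₀⟩
end

section
/- Let (Z, d) be a metric space, μ a Borel probability measure on Z, ρ > 0, C > 0, and ξ ∈ Z a point such that d(ξ, η) ≤ 1 for all η ∈ Z and μ(B(ξ, ε)) ≤ C·ε^{2ρ} for all ε > 0, where B(ξ, ε) is the open ball of radius ε around ξ. For λ ∈ ℂ with Im λ < 0, define F(λ) = ∫_Z d(ξ, η)^{2(iλ − ρ)} dμ(η), where for t ∈ (0, 1] and z ∈ ℂ we set t^z = exp(z·log t), and 0^z := 0. Then F is well defined (the integrand is μ-integrable) and F is holomorphic on the open half-plane {λ ∈ ℂ : Im λ < 0}. -/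
open Filter Topology MeasureTheory Complex

/-!
Write `d = dist ξ`. Where `d ≠ 0` one has `d ^ z = exp (z * log d)`, so the integral of `d ^ z` over
`{d ≠ 0}` is the complex moment generating function of `log d`, which is holomorphic in the
interior of its strip of convergence. That strip contains every real `s > -2ρ`: for `s < 0`, the
layer cake formula turns the integral of `(d⁻¹) ^ (-s)` into the Mellin integral of the tail
`t ↦ μ {t < d⁻¹}`, which is `O(t ^ (-2ρ))`, and for `s ≥ 0` the function `d ^ s` is bounded.
Finally `λ ↦ 2 (i λ - ρ)` maps the lower half-plane into `{z | -2ρ < re z}`.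
-/

open ProbabilityTheory

section Moments

variable {Ω : Type*} [MeasurableSpace Ω] {μ : Measure Ω} {f : Ω → ℝ} {a : ℝ}

lemma isBigO_measureReal_of_le_ofReal_mul {α : Type*} {l : Filter α} {s : α → Set Ω}
    {g : α → ℝ} {C : ℝ} (h : ∀ᶠ x in l, μ (s x) ≤ ENNReal.ofReal (C * g x)) :
    (fun x ↦ μ.real (s x)) =O[l] g := by
  refine .of_bound |C| (h.mono fun x hx ↦ ?_)
  rw [Real.norm_of_nonneg measureReal_nonneg, Real.norm_eq_abs, ← abs_mul]
  exact ENNReal.toReal_le_of_le_ofReal (abs_nonneg _)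
    (hx.trans (ENNReal.ofReal_le_ofReal (le_abs_self _)))

variable [IsFiniteMeasure μ]

lemma antitone_measureReal_lt : Antitone fun t ↦ μ.real {ω | t < f ω} :=
  fun _ _ hst ↦ measureReal_mono fun _ hω ↦ hst.trans_lt hω

lemma integrable_rpow_of_isBigO_measureReal_lt {b : ℝ} (hf : AEMeasurable f μ) (hf0 : 0 ≤ᵐ[μ] f)
    (hb : 0 < b) (hba : b < a)
    (htail : (fun t ↦ μ.real {ω | t < f ω}) =O[atTop] fun t ↦ t ^ (-a)) :
    Integrable (fun ω ↦ f ω ^ b) μ := by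
  have hbot : (fun t ↦ μ.real {ω | t < f ω}) =O[𝓝[>] 0] fun t ↦ t ^ (-(0 : ℝ)) :=
    .of_bound (μ.real Set.univ) (.of_forall fun t ↦ by
      simpa [abs_of_nonneg] using measureReal_mono (μ := μ) (Set.subset_univ {ω | t < f ω}))
  have hcake : IntegrableOn (fun t ↦ t ^ (b - 1) * μ.real {ω | t < f ω}) (Set.Ioi 0) :=
    mellin_convergent_of_isBigO_scalar
      (antitone_measureReal_lt.locallyIntegrable.locallyIntegrableOn _) htail hba hbot hb
  refine ⟨(hf.pow_const b).aestronglyMeasurable, ?_⟩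
  rw [hasFiniteIntegral_iff_ofReal (hf0.mono fun ω hω ↦ Real.rpow_nonneg hω b),
    lintegral_rpow_eq_lintegral_meas_lt_mul μ hf0 hf hb]
  refine ENNReal.mul_lt_top ENNReal.ofReal_lt_top (lt_of_eq_of_lt ?_ hcake.lintegral_lt_top)
  refine setLIntegral_congr_fun measurableSet_Ioi fun t ht ↦ ?_
  rw [ENNReal.ofReal_mul (Real.rpow_nonneg (le_of_lt ht) _), ofReal_measureReal, mul_comm]

lemma isBigO_measureReal_lt_inv
    (hsmall : (fun ε ↦ μ.real {ω | f ω < ε}) =O[𝓝[>] 0] fun ε ↦ ε ^ a) :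
    (fun t ↦ μ.real {ω | t < (f ω)⁻¹}) =O[atTop] fun t ↦ t ^ (-a) := by
  have hle : ∀ t > 0, μ.real {ω | t < (f ω)⁻¹} ≤ μ.real {ω | f ω < t⁻¹} := fun t ht ↦
    measureReal_mono fun ω hω ↦ (lt_inv_comm₀ ht (inv_pos.1 (ht.trans hω))).1 hω
  calc (fun t ↦ μ.real {ω | t < (f ω)⁻¹})
      =O[atTop] fun t ↦ μ.real {ω | f ω < t⁻¹} := by
        refine .of_bound' ((eventually_gt_atTop 0).mono fun t ht ↦ ?_)
        simpa only [Real.norm_of_nonneg measureReal_nonneg] using hle t ht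
    _ =O[atTop] fun t ↦ t⁻¹ ^ a := hsmall.comp_tendsto tendsto_inv_atTop_nhdsGT_zero
    _ =ᶠ[atTop] fun t ↦ t ^ (-a) := (eventually_ge_atTop 0).mono fun t ht ↦ by
        simp only [Real.inv_rpow ht, Real.rpow_neg ht]

lemma integrable_rpow_of_neg_of_isBigO_measureReal_lt {s : ℝ} (hf : AEMeasurable f μ)
    (hf0 : 0 ≤ᵐ[μ] f) (hsmall : (fun ε ↦ μ.real {ω | f ω < ε}) =O[𝓝[>] 0] fun ε ↦ ε ^ a)
    (has : -a < s) (hs : s < 0) :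
    Integrable (fun ω ↦ f ω ^ s) μ := by
  refine (integrable_rpow_of_isBigO_measureReal_lt (b := -s) hf.inv
    (hf0.mono fun ω hω ↦ inv_nonneg.2 hω) (neg_pos.2 hs) (neg_lt.1 has)
    (isBigO_measureReal_lt_inv hsmall)).congr (hf0.mono fun ω hω ↦ ?_)
  simp only [Pi.inv_apply, Real.inv_rpow hω, Real.rpow_neg hω, inv_inv]

lemma integrable_rpow_of_nonneg_of_ae_le {s D : ℝ} (hf : AEMeasurable f μ) (hf0 : 0 ≤ᵐ[μ] f)
    (hfD : ∀ᵐ ω ∂μ, f ω ≤ D) (hs : 0 ≤ s) :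
    Integrable (fun ω ↦ f ω ^ s) μ := by
  refine .of_bound (hf.pow_const s).aestronglyMeasurable (D ^ s) ?_
  filter_upwards [hf0, hfD] with ω hω hωD
  rw [Real.norm_of_nonneg (Real.rpow_nonneg hω s)]
  exact Real.rpow_le_rpow hω hωD hs

end Moments

lemma ite_eq_zero_eq_indicator_support {Ω M N : Type*} [Zero M] [DecidableEq M] [Zero N]
    (f : Ω → M) (g : Ω → N) :
    (fun ω ↦ if f ω = 0 then 0 else g ω) = f.support.indicator g := by
  ext ω
  by_cases h : f ω = 0 <;> simp [h]

lemma eqOn_support_cpow_cexp_mul_log {Ω : Type*} {f : Ω → ℝ} (hf0 : 0 ≤ f) (z : ℂ) :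
    Set.EqOn (fun ω ↦ (f ω : ℂ) ^ z) (fun ω ↦ cexp (z * (Real.log (f ω) : ℝ))) f.support := by
  intro ω hω
  simp only [cpow_def_of_ne_zero (ofReal_ne_zero.2 hω), ofReal_log (hf0 ω), mul_comm]

section ComplexMoments

variable {Ω : Type*} [MeasurableSpace Ω] {μ : Measure Ω} {f : Ω → ℝ} {a D : ℝ}

lemma mem_integrableExpSet_log_of_integrable_rpow {s : ℝ} (hf : Measurable f) (hf0 : 0 ≤ f)
    (h : Integrable (fun ω ↦ f ω ^ s) μ) :
    s ∈ integrableExpSet (fun ω ↦ Real.log (f ω)) (μ.restrict f.support) := by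
  refine h.integrableOn.congr_fun (fun ω hω ↦ ?_) (measurableSet_support hf)
  simp only [Real.rpow_def_of_pos ((hf0 ω).lt_of_ne' hω), mul_comm]

variable [IsFiniteMeasure μ]

lemma Ioi_subset_integrableExpSet_log (hf : Measurable f) (hf0 : 0 ≤ f)
    (hfD : ∀ᵐ ω ∂μ, f ω ≤ D)
    (hsmall : (fun ε ↦ μ.real {ω | f ω < ε}) =O[𝓝[>] 0] fun ε ↦ ε ^ a) :
    Set.Ioi (-a) ⊆ integrableExpSet (fun ω ↦ Real.log (f ω)) (μ.restrict f.support) := by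
  intro s has
  apply mem_integrableExpSet_log_of_integrable_rpow hf hf0
  rcases lt_or_ge s 0 with hs | hs
  · exact integrable_rpow_of_neg_of_isBigO_measureReal_lt hf.aemeasurable (.of_forall hf0) hsmall
      has hs
  · exact integrable_rpow_of_nonneg_of_ae_le hf.aemeasurable (.of_forall hf0) hfD hs

lemma integrableOn_support_cpow (hf : Measurable f) (hf0 : 0 ≤ f) (hfD : ∀ᵐ ω ∂μ, f ω ≤ D)
    (hsmall : (fun ε ↦ μ.real {ω | f ω < ε}) =O[𝓝[>] 0] fun ε ↦ ε ^ a)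
    {z : ℂ} (hz : -a < z.re) :
    IntegrableOn (fun ω ↦ (f ω : ℂ) ^ z) f.support μ :=
  (integrableOn_congr_fun (eqOn_support_cpow_cexp_mul_log hf0 z) (measurableSet_support hf)).2
    (integrable_cexp_mul_of_re_mem_integrableExpSet hf.log.aemeasurable
      (Ioi_subset_integrableExpSet_log hf hf0 hfD hsmall hz))

lemma differentiableOn_setIntegral_support_cpow (hf : Measurable f) (hf0 : 0 ≤ f)
    (hfD : ∀ᵐ ω ∂μ, f ω ≤ D)
    (hsmall : (fun ε ↦ μ.real {ω | f ω < ε}) =O[𝓝[>] 0] fun ε ↦ ε ^ a) :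
    DifferentiableOn ℂ (fun z : ℂ ↦ ∫ ω in f.support, (f ω : ℂ) ^ z ∂μ) {z | -a < z.re} := by
  have hmgf (z : ℂ) : ∫ ω in f.support, (f ω : ℂ) ^ z ∂μ =
      complexMGF (fun ω ↦ Real.log (f ω)) (μ.restrict f.support) z :=
    setIntegral_congr_fun (measurableSet_support hf) (eqOn_support_cpow_cexp_mul_log hf0 z)
  simp only [hmgf]
  exact differentiableOn_complexMGF.mono fun z hz ↦
    interior_maximal (Ioi_subset_integrableExpSet_log hf hf0 hfD hsmall) isOpen_Ioi hz

end ComplexMoments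

theorem cFunction_integral_holomorphic_general
    {Z : Type*} [PseudoMetricSpace Z] [MeasurableSpace Z] [OpensMeasurableSpace Z]
    {μ : Measure Z} [IsFiniteMeasure μ] {ρ D : ℝ} {ξ : Z}
    (hdist : ∀ᵐ η ∂μ, dist ξ η ≤ D)
    (hball : (fun ε ↦ μ.real (Metric.ball ξ ε)) =O[𝓝[>] 0] fun ε ↦ ε ^ (2 * ρ)) :
    (∀ l : ℂ, l.im < 0 →
      Integrable (fun η ↦ if dist ξ η = 0 then (0 : ℂ)
        else (dist ξ η : ℂ) ^ (2 * (I * l - (ρ : ℂ)))) μ) ∧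
    DifferentiableOn ℂ
      (fun l : ℂ ↦ ∫ η, (if dist ξ η = 0 then (0 : ℂ)
        else (dist ξ η : ℂ) ^ (2 * (I * l - (ρ : ℂ)))) ∂μ)
      {l : ℂ | l.im < 0} := by
  have hmeas : Measurable (dist ξ) := (continuous_const.dist continuous_id).measurable
  have hnonneg : 0 ≤ dist ξ := fun _ ↦ dist_nonneg
  have hsmall : (fun ε ↦ μ.real {η | dist ξ η < ε}) =O[𝓝[>] 0] fun ε ↦ ε ^ (2 * ρ) := by
    simpa only [Metric.ball, dist_comm] using hball
  have hexponent {l : ℂ} (hl : l.im < 0) : -(2 * ρ) < (2 * (I * l - (ρ : ℂ))).re := by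
    have hre : (2 * (I * l - (ρ : ℂ))).re = 2 * (-l.im - ρ) := by simp
    linarith
  simp only [ite_eq_zero_eq_indicator_support, integral_indicator (measurableSet_support hmeas),
    integrable_indicator_iff (measurableSet_support hmeas)]
  refine ⟨fun l hl ↦ integrableOn_support_cpow hmeas hnonneg hdist hsmall (hexponent hl), ?_⟩
  exact (differentiableOn_setIntegral_support_cpow hmeas hnonneg hdist hsmall).comp
    (by fun_prop) fun l hl ↦ hexponent hl

/-- Let `(Z, d)` be a metric space, `μ` a Borel probability measure on `Z`,
`ρ > 0`, `C > 0`, and `ξ ∈ Z` such that `d(ξ, η) ≤ 1` for all `η` and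
`μ(B(ξ, ε)) ≤ C * ε^(2ρ)` for all `ε > 0`. For `λ ∈ ℂ` with `Im λ < 0`, define
`F(λ) = ∫ d(ξ, η)^(2(iλ - ρ)) dμ(η)`, with `t^z = exp (z log t)` for `t ∈ (0,1]` and
`0^z := 0`. Then the integrand is `μ`-integrable for every such `λ`, and `F` is holomorphic on
the open half-plane `{λ : Im λ < 0}`. -/
theorem cFunction_integral_holomorphic
    {Z : Type*} [MetricSpace Z] [MeasurableSpace Z] [BorelSpace Z]
    (μ : Measure Z) [IsProbabilityMeasure μ]
    (ρ C : ℝ) (hρ : 0 < ρ) (hC : 0 < C) (ξ : Z)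
    (hdiam : ∀ η, dist ξ η ≤ 1)
    (hball : ∀ ε > (0 : ℝ), μ (Metric.ball ξ ε) ≤ ENNReal.ofReal (C * ε ^ (2 * ρ))) :
    (∀ l : ℂ, l.im < 0 →
      Integrable (fun η => if dist ξ η = 0 then (0 : ℂ)
        else (dist ξ η : ℂ) ^ (2 * (Complex.I * l - (ρ : ℂ)))) μ) ∧
    DifferentiableOn ℂ
      (fun l : ℂ => ∫ η, (if dist ξ η = 0 then (0 : ℂ)
        else (dist ξ η : ℂ) ^ (2 * (Complex.I * l - (ρ : ℂ)))) ∂μ)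
      {l : ℂ | l.im < 0} :=
  cFunction_integral_holomorphic_general (.of_forall hdiam)
    (isBigO_measureReal_of_le_ofReal_mul (eventually_mem_nhdsWithin.mono hball))
end
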